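/- Let U be a finite nonempty set and let S_i, S_j be nonempty subsets of U. If π is a permutation of U chosen uniformly at random, then the probability that the minimum of π over S_i equals the minimum of π over S_j (i.e., Pr[min π(S_i) = min π(S_j)]) is exactly the Jaccard similarity |S_i ∩ S_j| / |S_i ∪ S_j|. (Here min π(S) denotes the minimum value of π(x) over x ∈ S, with respect to a fixed linear order on U, e.g., U = {1, …, n}.) -/

import Mathlib

/-!
Write `T = S₁ ∪ S₂`. Every permutation `π` has exactly one minimizer on `T`, and the two minima
agree precisely when that minimizer lies in `S₁ ∩ S₂` (`min'_image_eq_iff`). Composing with a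
transposition of two points of `T` shows that each point of `T` is the minimizer for the same
number of permutations (`card_minAt_eq`). Hence the number of permutations whose minimizer on `T`
lies in a given `A ⊆ T` is proportional to `|A|` (`card_exists_minAt`); taking `A = S₁ ∩ S₂` and
`A = T` and dividing gives the Jaccard similarity.
-/

open Finset

section MinHash

variable {U : Type*} [Fintype U] [LinearOrder U]

/-- The permutations `π` for which `x` minimizes `π` on `T`. Membership `x ∈ T` is not built in. -/
def minAt (T : Finset U) (x : U) : Finset (Equiv.Perm U) :=
  Finset.univ.filter fun π => ∀ y ∈ T, π x ≤ π y

lemma mem_minAt {T : Finset U} {x : U} {π : Equiv.Perm U} :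
    π ∈ minAt T x ↔ ∀ y ∈ T, π x ≤ π y := by
  simp [minAt]

/-- Precomposition with the transposition `(x y)`, which preserves `T`, injects the permutations
minimized at `x` into those minimized at `y`. -/
lemma card_minAt_le {T : Finset U} {x y : U} (hx : x ∈ T) (hy : y ∈ T) :
    (minAt T x).card ≤ (minAt T y).card := by
  refine Finset.card_le_card_of_injOn (fun π => π * Equiv.swap x y) ?_ ?_
  · intro π hπ
    have hπ' := mem_minAt.1 (Finset.mem_coe.1 hπ)
    refine Finset.mem_coe.2 (mem_minAt.2 fun z hz => ?_)
    simp only [Equiv.Perm.mul_apply, Equiv.swap_apply_right]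
    apply hπ'
    rw [Equiv.swap_apply_def]
    split_ifs <;> assumption
  · intro π _ σ _ h
    exact mul_right_cancel h

lemma card_minAt_eq {T : Finset U} {x y : U} (hx : x ∈ T) (hy : y ∈ T) :
    (minAt T x).card = (minAt T y).card :=
  le_antisymm (card_minAt_le hx hy) (card_minAt_le hy hx)

/-- The minimizer on `T` is unique, so the permutations minimized somewhere in `A ⊆ T` split into
`|A|` disjoint classes of equal size; the point `t` of `T` only serves to name that size. -/
lemma card_exists_minAt {A T : Finset U} (hA : A ⊆ T) {t : U} (ht : t ∈ T) :
    (A.biUnion (minAt T)).card = A.card * (minAt T t).card := by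
  rw [Finset.card_biUnion, Finset.sum_congr rfl fun x hx => card_minAt_eq (hA hx) ht]
  · simp
  · intro x hx y hy hxy
    refine Finset.disjoint_left.2 fun π h₁ h₂ => hxy (π.injective ?_)
    exact le_antisymm (mem_minAt.1 h₁ y (hA hy)) (mem_minAt.1 h₂ x (hA hx))

lemma biUnion_minAt_self {T : Finset U} (hT : T.Nonempty) :
    T.biUnion (minAt T) = Finset.univ := by
  ext π
  simpa [mem_minAt] using Finset.exists_min_image T π hT

lemma min'_image_eq_of_forall_le {S : Finset U} (hS : S.Nonempty) {π : Equiv.Perm U} {x : U}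
    (hx : x ∈ S) (h : ∀ y ∈ S, π x ≤ π y) : (S.image π).min' (hS.image π) = π x := by
  refine le_antisymm (Finset.min'_le _ _ (Finset.mem_image_of_mem π hx)) ?_
  refine Finset.le_min' _ _ _ fun z hz => ?_
  obtain ⟨y, hy, rfl⟩ := Finset.mem_image.1 hz
  exact h y hy

lemma min'_image_eq_iff {S₁ S₂ : Finset U} (hS₁ : S₁.Nonempty) (hS₂ : S₂.Nonempty)
    (π : Equiv.Perm U) :
    (S₁.image π).min' (hS₁.image π) = (S₂.image π).min' (hS₂.image π) ↔
      ∃ x ∈ S₁ ∩ S₂, ∀ y ∈ S₁ ∪ S₂, π x ≤ π y := by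
  constructor
  · intro h
    obtain ⟨a, ha, ha'⟩ := Finset.exists_min_image S₁ π hS₁
    obtain ⟨b, hb, hb'⟩ := Finset.exists_min_image S₂ π hS₂
    rw [min'_image_eq_of_forall_le hS₁ ha ha', min'_image_eq_of_forall_le hS₂ hb hb'] at h
    obtain rfl := π.injective h
    exact ⟨a, Finset.mem_inter.2 ⟨ha, hb⟩, fun y hy =>
      (Finset.mem_union.1 hy).elim (ha' y) (hb' y)⟩
  · rintro ⟨x, hx, h⟩
    obtain ⟨h₁, h₂⟩ := Finset.mem_inter.1 hx
    rw [min'_image_eq_of_forall_le hS₁ h₁ fun y hy => h y (Finset.mem_union_left _ hy),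
      min'_image_eq_of_forall_le hS₂ h₂ fun y hy => h y (Finset.mem_union_right _ hy)]

end MinHash

/-- MinHash collision probability equals Jaccard similarity: for nonempty subsets
`S₁, S₂` of a finite linearly ordered universe `U`, if `π` is a uniformly random
permutation of `U`, then `Pr[min π(S₁) = min π(S₂)] = |S₁ ∩ S₂| / |S₁ ∪ S₂|`. -/
theorem minhash_collision_prob_eq_jaccard
    {U : Type*} [Fintype U] [LinearOrder U] [Nonempty U]
    (S₁ S₂ : Finset U) (hS₁ : S₁.Nonempty) (hS₂ : S₂.Nonempty) :
    ((Finset.univ.filter (fun π : Equiv.Perm U =>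
        (S₁.image π).min' (hS₁.image π) = (S₂.image π).min' (hS₂.image π))).card : ℝ)
        / (Fintype.card (Equiv.Perm U) : ℝ)
      = ((S₁ ∩ S₂).card : ℝ) / ((S₁ ∪ S₂).card : ℝ) := by
  obtain ⟨t, ht⟩ := hS₁
  have hS₁ : S₁.Nonempty := ⟨t, ht⟩
  have htT : t ∈ S₁ ∪ S₂ := Finset.mem_union_left _ ht
  have hevent : (Finset.univ.filter (fun π : Equiv.Perm U =>
      (S₁.image π).min' (hS₁.image π) = (S₂.image π).min' (hS₂.image π)))
      = (S₁ ∩ S₂).biUnion (minAt (S₁ ∪ S₂)) := by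
    ext π
    rw [Finset.mem_filter_univ, min'_image_eq_iff hS₁ hS₂]
    simp only [Finset.mem_biUnion, mem_minAt]
  have htotal : Fintype.card (Equiv.Perm U)
      = (S₁ ∪ S₂).card * (minAt (S₁ ∪ S₂) t).card := by
    rw [← card_exists_minAt subset_rfl htT, biUnion_minAt_self ⟨t, htT⟩, Finset.card_univ]
  have hpos : (minAt (S₁ ∪ S₂) t).card ≠ 0 := by
    intro h
    rw [h, mul_zero] at htotal
    exact Fintype.card_ne_zero htotal
  rw [hevent, card_exists_minAt (Finset.inter_subset_left.trans Finset.subset_union_left) htT,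
    htotal, Nat.cast_mul, Nat.cast_mul]
  exact mul_div_mul_right _ _ (Nat.cast_ne_zero.2 hpos)
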